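/- arXiv:1110.3553 — 8 statements merged into one kernel-verified Lean document; each statement's English description precedes it below -/
import Mathlib

section
/- For every finite lattice L, the c-rank of L equals the height of L, i.e. nk(L) = hgt(L). -/
/-- A list `ℓ 0, …, ℓ (k-1)` of elements of a poset is c-independent with witness
`m 0, …, m (k-1)`: `ℓ j ≰ m j` for all `j`, and `ℓ i ≤ m j` whenever `i < j`. -/
def CIndepList {P : Type*} [PartialOrder P] {k : ℕ} (ℓ m : Fin k → P) : Prop :=
  (∀ j, ¬ ℓ j ≤ m j) ∧ ∀ i j : Fin k, i < j → ℓ i ≤ m j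

/-- The c-rank of a poset: the maximum cardinality of a c-independent subset,
i.e. the largest `k` admitting an injective c-independent list of length `k`. -/
noncomputable def crank (P : Type*) [PartialOrder P] : ℕ :=
  sSup {k | ∃ ℓ m : Fin k → P, Function.Injective ℓ ∧ CIndepList ℓ m}

/-- The height of a poset: the largest `k` such that there is a strict chain
`p 0 < p 1 < ⋯ < p k`. -/
noncomputable def pheight (P : Type*) [PartialOrder P] : ℕ :=
  sSup {k | ∃ p : Fin (k + 1) → P, StrictMono p}

/-!
A chain `p 0 < ⋯ < p k` gives the c-independent list `p 1, …, p k` with witness `p 0, …, p (k - 1)`.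
Conversely, the partial joins `ℓ 0 ⊔ ⋯ ⊔ ℓ (j - 1)` of a c-independent list increase strictly: the
`j`-th of them lies below the witness `m j`, which `ℓ j` does not.
-/

section PartialOrder

variable {P : Type*} [PartialOrder P] {k : ℕ}

theorem CIndepList.injective {ℓ m : Fin k → P} (h : CIndepList ℓ m) : Function.Injective ℓ :=
  Function.Injective.of_lt_imp_ne fun i j hij heq => h.1 j (heq ▸ h.2 i j hij)

theorem cIndepList_of_strictMono {p : Fin (k + 1) → P} (hp : StrictMono p) :
    CIndepList (fun j : Fin k => p j.succ) (fun j => p j.castSucc) :=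
  ⟨fun _ => (hp Fin.castSucc_lt_succ).not_ge, fun _ _ hij =>
    hp.monotone (Fin.succ_le_castSucc_iff.2 hij)⟩

theorem crank_of_isEmpty [IsEmpty P] : crank P = 0 := by
  refine Nat.le_zero.1 (csSup_le' ?_)
  rintro k ⟨ℓ, -⟩
  exact not_lt.1 fun hk => isEmptyElim (ℓ ⟨0, hk⟩)

-- Not even `k = 0` admits a chain here: the value is the default `sSup ∅ = 0`.
theorem pheight_of_isEmpty [IsEmpty P] : pheight P = 0 := by
  refine Nat.le_zero.1 (csSup_le' ?_)
  rintro k ⟨p, -⟩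
  exact isEmptyElim (p 0)

end PartialOrder

section PartialJoin

variable {P : Type*} [SemilatticeSup P] [OrderBot P] {k : ℕ} {ℓ m : Fin k → P}

/-- The join `ℓ 0 ⊔ ⋯ ⊔ ℓ (j - 1)` of the first `j` terms of a list, which turns c-independent lists
into chains. The index `j` ranges over `Fin (k + 1)`, and the empty join is `⊥`. -/
def partialJoin (ℓ : Fin k → P) (j : Fin (k + 1)) : P :=
  (Finset.univ.filter fun i : Fin k => i.castSucc < j).sup ℓ

theorem partialJoin_succ (ℓ : Fin k → P) (j : Fin k) :
    partialJoin ℓ j.succ = partialJoin ℓ j.castSucc ⊔ ℓ j := by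
  have insert_eq : (Finset.univ.filter fun i : Fin k => i.castSucc < j.succ) =
      insert j (Finset.univ.filter fun i => i.castSucc < j.castSucc) := by
    ext i
    simp [le_iff_eq_or_lt]
  rw [partialJoin, insert_eq, Finset.sup_insert, sup_comm, partialJoin]

theorem CIndepList.partialJoin_castSucc_le (h : CIndepList ℓ m) (j : Fin k) :
    partialJoin ℓ j.castSucc ≤ m j :=
  Finset.sup_le fun i hi => h.2 i j (Fin.castSucc_lt_castSucc_iff.1 (Finset.mem_filter.1 hi).2)

theorem CIndepList.strictMono_partialJoin (h : CIndepList ℓ m) : StrictMono (partialJoin ℓ) := by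
  refine Fin.strictMono_iff_lt_succ.2 fun j => ?_
  rw [partialJoin_succ, left_lt_sup]
  exact fun hle => h.1 j (hle.trans (h.partialJoin_castSucc_le j))

variable (P k) in
theorem exists_cIndepList_iff_exists_strictMono :
    (∃ ℓ m : Fin k → P, Function.Injective ℓ ∧ CIndepList ℓ m) ↔
      ∃ p : Fin (k + 1) → P, StrictMono p :=
  ⟨fun ⟨ℓ, _, _, h⟩ => ⟨partialJoin ℓ, h.strictMono_partialJoin⟩, fun ⟨_, hp⟩ =>
    ⟨_, _, (cIndepList_of_strictMono hp).injective, cIndepList_of_strictMono hp⟩⟩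

end PartialJoin

section FiniteDimensional

theorem wellFoundedLT_of_finiteDimensionalOrder (α : Type*) [Preorder α]
    [FiniteDimensionalOrder α] : WellFoundedLT α :=
  ⟨SetRel.IsWellFounded.of_finiteDimensional {(a, b) : α × α | a < b}⟩

theorem finiteDimensionalOrder_of_finite (α : Type*) [Preorder α] [Finite α] [Nonempty α] :
    FiniteDimensionalOrder α := by
  classical
  have := Fintype.ofFinite α
  exact ⟨Finite.exists_max (RelSeries.length : LTSeries α → ℕ)⟩

theorem exists_isBot_of_wellFoundedLT (α : Type*) [Preorder α] [IsCodirectedOrder α] [Nonempty α]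
    [WellFoundedLT α] : ∃ a : α, IsBot a := by
  obtain ⟨a, ha⟩ :=
    exists_minimal_of_wellFoundedLT (fun _ : α => True) ⟨Classical.arbitrary α, trivial⟩
  exact ⟨a, (minimal_true.1 ha).isBot⟩

end FiniteDimensional

theorem crank_eq_pheight_general (L : Type*) [Lattice L] [FiniteDimensionalOrder L] :
    crank L = pheight L := by
  have := LTSeries.nonempty_of_finiteDimensionalOrder L
  have := wellFoundedLT_of_finiteDimensionalOrder L
  obtain ⟨b, hb⟩ := exists_isBot_of_wellFoundedLT L
  let : OrderBot L := { bot := b, bot_le := hb }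
  simp only [crank, pheight, exists_cIndepList_iff_exists_strictMono]

/-- For every finite lattice `L`, the c-rank of `L` equals the height of `L`. -/
theorem crank_eq_pheight (L : Type*) [Lattice L] [Fintype L] :
    crank L = pheight L := by
  obtain hL | hL := isEmpty_or_nonempty L
  · rw [crank_of_isEmpty, pheight_of_isEmpty]
  · have := finiteDimensionalOrder_of_finite L
    exact crank_eq_pheight_general L
end

section
/- Every finite lattice L has a c-independent subset X with |X| = nk(L) such that every element of X is strictly join irreducible and different from the bottom element ⊥. -/
/-- A subset is c-independent if it can be enumerated without repetition as a
c-independent list admitting some witness. -/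
def CIndepSet {P : Type*} [PartialOrder P] (X : Set P) : Prop :=
  ∃ (k : ℕ) (ℓ m : Fin k → P), Function.Injective ℓ ∧ Set.range ℓ = X ∧ CIndepList ℓ m

/-- An element `ℓ` of a lattice is strictly join irreducible if whenever `ℓ` is the
join of a nonempty (finite) subset `X`, `ℓ` itself belongs to `X`. -/
def StrictJoinIrred {L : Type*} [Lattice L] (ℓ : L) : Prop :=
  ∀ (X : Finset L) (hX : X.Nonempty), ℓ = X.sup' hX id → ℓ ∈ X

/-!
In a lattice without infinite descending chains every `ℓ j` is a finite join of join irreducible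
elements. As `ℓ j ≰ m j`, one of these, say `p j`, satisfies `p j ≰ m j`, and `p i ≤ ℓ i ≤ m j` for
`i < j`. Replacing each `ℓ j` by `p j` thus keeps the witness, and a c-independent list never
repeats an element. A finite c-rank already excludes infinite descending chains, because any
descending chain of `k + 1` elements, read backwards, yields a c-independent list of length `k`.
-/

section PartialOrder

variable {P : Type*} [PartialOrder P]

namespace CIndepList

variable {k : ℕ} {ℓ m p : Fin k → P}

theorem injective_s3 (h : CIndepList ℓ m) : Function.Injective ℓ :=
  .of_lt_imp_ne fun i j hij heq => h.1 j (heq ▸ h.2 i j hij)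

theorem of_le (h : CIndepList ℓ m) (hle : ∀ j, p j ≤ ℓ j) (hp : ∀ j, ¬ p j ≤ m j) :
    CIndepList p m :=
  ⟨hp, fun i j hij => (hle i).trans (h.2 i j hij)⟩

theorem cIndepSet_range (h : CIndepList ℓ m) : CIndepSet (Set.range ℓ) :=
  ⟨k, ℓ, m, h.injective_s3, rfl, h⟩

theorem ncard_range (h : CIndepList ℓ m) : (Set.range ℓ).ncard = k := by
  rw [← Nat.card_coe_set_eq, Nat.card_range_of_injective h.injective_s3, Nat.card_fin]

end CIndepList

theorem cIndepList_rev_of_strictAnti {f : ℕ → P} (hf : StrictAnti f) (k : ℕ) :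
    CIndepList (fun j : Fin k => f j.rev) (fun j : Fin k => f (j.rev + 1)) :=
  ⟨fun j => (hf (Nat.lt_succ_self j.rev)).not_ge,
    fun _ _ hij => hf.antitone (Nat.succ_le_of_lt (Fin.rev_lt_rev.mpr hij))⟩

variable (P) in
/-- The lengths of the c-independent lists in `P`. The c-rank of `P` is their maximum if they are
bounded; otherwise `crank P` has the junk value `0`. Injectivity is not demanded, since it is
automatic by `CIndepList.injective`. -/
def cIndepLengths : Set ℕ :=
  {k | ∃ ℓ m : Fin k → P, CIndepList ℓ m}

variable (P) in
theorem crank_eq_sSup_cIndepLengths : crank P = sSup (cIndepLengths P) := by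
  refine congrArg sSup (Set.ext fun k => ⟨?_, ?_⟩)
  · rintro ⟨ℓ, m, -, h⟩
    exact ⟨ℓ, m, h⟩
  · rintro ⟨ℓ, m, h⟩
    exact ⟨ℓ, m, h.injective_s3, h⟩

variable (P) in
theorem zero_mem_cIndepLengths : 0 ∈ cIndepLengths P :=
  ⟨Fin.elim0, Fin.elim0, fun j => j.elim0, fun i => i.elim0⟩

theorem crank_mem_cIndepLengths (h : BddAbove (cIndepLengths P)) :
    crank P ∈ cIndepLengths P := by
  rw [crank_eq_sSup_cIndepLengths]
  exact Nat.sSup_mem ⟨0, zero_mem_cIndepLengths P⟩ h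

variable (P) in
theorem bddAbove_cIndepLengths [Finite P] : BddAbove (cIndepLengths P) := by
  refine ⟨Nat.card P, ?_⟩
  rintro k ⟨ℓ, m, h⟩
  simpa only [Nat.card_fin] using Nat.card_le_card_of_injective ℓ h.injective_s3

theorem wellFoundedLT_of_bddAbove_cIndepLengths (h : BddAbove (cIndepLengths P)) :
    WellFoundedLT P := by
  refine ⟨wellFounded_iff_isEmpty_descending_chain.mpr ⟨fun ⟨f, hf⟩ => ?_⟩⟩
  have mem_lengths (k : ℕ) : k ∈ cIndepLengths P :=
    ⟨_, _, cIndepList_rev_of_strictAnti (strictAnti_nat_of_succ_lt hf) k⟩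
  exact not_bddAbove_univ (h.mono fun k _ => mem_lengths k)

end PartialOrder

section SemilatticeSup

variable {S : Type*} [SemilatticeSup S] [OrderBot S] [WellFoundedLT S]

theorem exists_supIrred_le_not_le {a b : S} (h : ¬ a ≤ b) :
    ∃ p, SupIrred p ∧ p ≤ a ∧ ¬ p ≤ b := by
  obtain ⟨s, rfl, hs⟩ := exists_supIrred_decomposition a
  obtain ⟨p, hp, hpb⟩ : ∃ p ∈ s, ¬ p ≤ b := by
    simpa only [Finset.sup_le_iff, id_eq, not_forall, exists_prop] using h
  exact ⟨p, hs hp, Finset.le_sup (f := id) hp, hpb⟩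

theorem CIndepList.exists_supIrred {k : ℕ} {ℓ m : Fin k → S}
    (h : CIndepList ℓ m) : ∃ p : Fin k → S, CIndepList p m ∧ ∀ j, SupIrred (p j) := by
  choose p hirr hle hnot using fun j => exists_supIrred_le_not_le (h.1 j)
  exact ⟨p, h.of_le hle hnot, hirr⟩

end SemilatticeSup

theorem strictJoinIrred_of_supIrred {L : Type*} [Lattice L] {a : L} (ha : SupIrred a) :
    StrictJoinIrred a := by
  intro X hX hsup
  by_contra hmem
  have sup_lt : ∀ x < a, ∀ y < a, x ⊔ y < a := fun x hx y hy =>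
    (sup_le hx.le hy.le).lt_of_ne fun heq => (ha.2 heq).elim hx.ne hy.ne
  have lt_of_mem : ∀ x ∈ X, x < a := fun x hx =>
    (hsup ▸ X.le_sup' id hx).lt_of_ne fun heq => hmem (heq ▸ hx)
  exact hsup.not_gt (Finset.sup'_induction hX id sup_lt lt_of_mem)

theorem exists_cIndepSet_sji_general (L : Type*) [Lattice L] [OrderBot L]
    (hL : BddAbove (cIndepLengths L)) :
    ∃ X : Set L, CIndepSet X ∧ X.ncard = crank L ∧
      ∀ x ∈ X, StrictJoinIrred x ∧ x ≠ ⊥ := by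
  have := wellFoundedLT_of_bddAbove_cIndepLengths hL
  obtain ⟨ℓ, m, h⟩ := crank_mem_cIndepLengths hL
  obtain ⟨p, hp, hirr⟩ := h.exists_supIrred
  exact ⟨Set.range p, hp.cIndepSet_range, hp.ncard_range,
    Set.forall_mem_range.mpr fun j => ⟨strictJoinIrred_of_supIrred (hirr j), (hirr j).ne_bot⟩⟩

/-- Every finite lattice `L` has a c-independent subset `X` of cardinality `crank L`
all of whose elements are strictly join irreducible and different from `⊥`. -/
theorem exists_cIndepSet_sji (L : Type*) [Lattice L] [Fintype L] [OrderBot L] :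
    ∃ X : Set L, CIndepSet X ∧ X.ncard = crank L ∧
      ∀ x ∈ X, StrictJoinIrred x ∧ x ≠ ⊥ :=
  exists_cIndepSet_sji_general L (bddAbove_cIndepLengths L)
end

section
/- Let L and L′ be finite lattices and let φ : L → L′ be a surjective sup-map. If ℓ′₁,…,ℓ′_k is a c-independent list in L′ and ℓ₁,…,ℓ_k ∈ L satisfy φ(ℓᵢ) = ℓ′ᵢ for each i (one pullback chosen for each ℓ′ᵢ), then ℓ₁,…,ℓ_k is a c-independent list in L. -/
/-!
If `m` is any witness for `ℓ`, then `m j` is an upper bound of the `ℓ i` with `i < j`, so their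
join, the least possible choice, is a witness as well. Hence `ℓ` is c-independent if and only if no
`ℓ j` lies below the join of the entries preceding it. A sup-map is monotone and preserves these
joins, so a violation of this criterion in `L` would be carried to one in `L'`.
-/

section Criterion

variable {P : Type*} [SemilatticeSup P] [OrderBot P] {k : ℕ} {ℓ m : Fin k → P}

theorem CIndepList.sup_Iio_le (h : CIndepList ℓ m) (j : Fin k) : (Finset.Iio j).sup ℓ ≤ m j :=
  Finset.sup_le fun i hi => h.2 i j (Finset.mem_Iio.mp hi)

theorem exists_cIndepList_iff_forall_not_le_sup_Iio :
    (∃ m, CIndepList ℓ m) ↔ ∀ j, ¬ ℓ j ≤ (Finset.Iio j).sup ℓ where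
  mp := fun ⟨_, h⟩ j hj => h.1 j (hj.trans (h.sup_Iio_le j))
  mpr h := ⟨fun j => (Finset.Iio j).sup ℓ, h, fun _ _ hij => Finset.le_sup (Finset.mem_Iio.mpr hij)⟩

end Criterion

section Pullback

variable {L L' : Type*} [SemilatticeSup L] [OrderBot L] [SemilatticeSup L'] [OrderBot L']

/-- A map preserving the joins of all finite subsets, as a bundled `SupBotHom`. On finite lattices
these are the sup-maps; `⊥` is preserved as the join of the empty set. -/
def supBotHomOfMapFinsetSup (φ : L → L') (hsup : ∀ X : Finset L, φ (X.sup id) = X.sup φ) :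
    SupBotHom L L' where
  toFun := φ
  map_sup' x y := by
    classical
    simpa using hsup {x, y}
  map_bot' := by simpa using hsup ∅

theorem cIndepList_pullback_general {F : Type*} [FunLike F L L'] [SupBotHomClass F L L'] (φ : F)
    {k : ℕ} {ℓ : Fin k → L} (h' : ∃ m' : Fin k → L', CIndepList (φ ∘ ℓ) m') :
    ∃ m : Fin k → L, CIndepList ℓ m := by
  rw [exists_cIndepList_iff_forall_not_le_sup_Iio] at h' ⊢
  intro j hj
  apply h' j
  calc φ (ℓ j) ≤ φ ((Finset.Iio j).sup ℓ) := OrderHomClass.mono φ hj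
    _ = (Finset.Iio j).sup (φ ∘ ℓ) := map_finset_sup φ _ _

end Pullback

/-- Pullbacks along a surjective sup-map of a c-independent list are c-independent:
if `φ : L → L'` is a surjective sup-map, `ℓ' 0, …, ℓ' (k-1)` is c-independent in `L'`
with witness `m' 0, …, m' (k-1)`, and `φ (ℓ i) = ℓ' i` for each `i`, then
`ℓ 0, …, ℓ (k-1)` is a c-independent list in `L` (for some witness). -/
theorem cIndepList_pullback {L L' : Type*}
    [Lattice L] [Fintype L] [OrderBot L] [Lattice L'] [Fintype L'] [OrderBot L']
    (φ : L → L') (hsur : Function.Surjective φ)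
    (hsup : ∀ X : Finset L, φ (X.sup id) = X.sup φ)
    {k : ℕ} (ℓ' m' : Fin k → L') (h' : CIndepList ℓ' m')
    (ℓ : Fin k → L) (hpull : ∀ i, φ (ℓ i) = ℓ' i) :
    ∃ m : Fin k → L, CIndepList ℓ m := by
  obtain rfl : φ ∘ ℓ = ℓ' := funext hpull
  exact cIndepList_pullback_general (supBotHomOfMapFinsetSup φ hsup) ⟨m', h'⟩
end

section
/- Let L be a finite lattice with top element ⊤ and let ℓ₁,…,ℓ_k be a c-independent list with witness m₁,…,m_k. Define m̃_j := m_j ∧ m_{j+1} ∧ ⋯ ∧ m_k for j = 1,…,k, and define c_j := m̃_{j+1} for 1 ≤ j ≤ k−1 and c_k := ⊤. Then: (1) m̃₁ < m̃₂ < ⋯ < m̃_k < ⊤ is a strict chain in L; (2) the chain c₁ < c₂ < ⋯ < c_k is a c-independent list with witness m̃₁,…,m̃_k; (3) ℓ₁,…,ℓ_k is a push of this chain, i.e. ℓ_j ≤ c_j and ℓ_j ≰ m̃_j for every j. In particular, every c-independent subset of a finite lattice is a push of a strict chain. -/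
/-! The meets of the tails of the witness, including the empty tail, whose meet is `⊤`, form a
single chain `d 0 ≤ ⋯ ≤ d k` for which `m̃ j = d j` and `c j = d (j + 1)`. Each `ℓ j` lies below
`d (j + 1)` but not below `d j`, so every step of this chain is strict; and in any strict chain the
elements other than the least are c-independent, each element's predecessor being its witness. -/

section TailInf

variable {L : Type*} [SemilatticeInf L] [OrderTop L] {k : ℕ}

/-- The meet `m j ∧ ⋯ ∧ m (k-1)` of a tail of a list. The index `j` ranges over `Fin (k + 1)`, so
that the value at `Fin.last k` is the empty meet `⊤`. -/
def tailInf (m : Fin k → L) (j : Fin (k + 1)) : L :=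
  Finset.inf {i | j ≤ i.castSucc} m

theorem le_tailInf_iff {m : Fin k → L} {j : Fin (k + 1)} {x : L} :
    x ≤ tailInf m j ↔ ∀ i, j ≤ i.castSucc → x ≤ m i := by
  simp only [tailInf, Finset.le_inf_iff, Finset.mem_filter_univ]

theorem tailInf_mono (m : Fin k → L) : Monotone (tailInf m) := fun _ _ hij =>
  Finset.inf_mono <| Finset.monotone_filter_right _ fun _ _ => hij.trans

theorem tailInf_last (m : Fin k → L) : tailInf m (Fin.last k) = ⊤ :=
  top_unique <| le_tailInf_iff.2 fun i hi => absurd i.castSucc_lt_last hi.not_gt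

theorem tailInf_castSucc (m : Fin k → L) (j : Fin k) :
    tailInf m j.castSucc = (Finset.Ici j).inf' Finset.nonempty_Ici m := by
  rw [Finset.inf'_eq_inf, tailInf]
  congr 1
  ext i
  simp only [Finset.mem_filter_univ, Fin.castSucc_le_castSucc_iff, Finset.mem_Ici]

theorem tailInf_succ (m : Fin k → L) (j : Fin k) :
    tailInf m j.succ =
      if h : (j : ℕ) + 1 < k then tailInf m (Fin.castSucc ⟨(j : ℕ) + 1, h⟩) else ⊤ := by
  split_ifs with h
  · rfl
  · have hj : j.succ = Fin.last k := Fin.ext (by rw [Fin.val_succ, Fin.val_last]; omega)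
    rw [hj, tailInf_last]

end TailInf

namespace CIndepList

theorem of_strictMono {P : Type*} [PartialOrder P] {k : ℕ} {d : Fin (k + 1) → P}
    (hd : StrictMono d) :
    CIndepList (fun j => d j.succ) (fun j => d j.castSucc) :=
  ⟨fun j => (hd j.castSucc_lt_succ).not_ge,
    fun _ _ hij => hd.monotone (Fin.succ_le_castSucc_iff.2 hij)⟩

variable {L : Type*} [SemilatticeInf L] [OrderTop L] {k : ℕ} {ℓ m : Fin k → L}

theorem le_tailInf_succ (h : CIndepList ℓ m) (j : Fin k) : ℓ j ≤ tailInf m j.succ :=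
  le_tailInf_iff.2 fun i hi => h.2 j i (Fin.succ_le_castSucc_iff.1 hi)

theorem not_le_tailInf_castSucc (h : CIndepList ℓ m) (j : Fin k) :
    ¬ ℓ j ≤ tailInf m j.castSucc :=
  fun hle => h.1 j (le_tailInf_iff.1 hle j le_rfl)

theorem strictMono_tailInf (h : CIndepList ℓ m) : StrictMono (tailInf m) :=
  Fin.strictMono_iff_lt_succ.2 fun j =>
    (tailInf_mono m j.castSucc_lt_succ.le).lt_of_not_ge fun hge =>
      h.not_le_tailInf_castSucc j ((h.le_tailInf_succ j).trans hge)

end CIndepList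

theorem cIndepList_is_push_of_chain_general {L : Type*} [SemilatticeInf L] [OrderTop L]
    {k : ℕ} (ℓ m : Fin k → L) (h : CIndepList ℓ m) (mt c : Fin k → L)
    (hmt : ∀ j : Fin k, mt j = (Finset.Ici j).inf' ⟨j, Finset.mem_Ici.2 le_rfl⟩ m)
    (hc : ∀ j : Fin k, c j = if h : (j : ℕ) + 1 < k then mt ⟨(j : ℕ) + 1, h⟩ else ⊤) :
    StrictMono mt ∧ (∀ j, mt j < ⊤) ∧ CIndepList c mt ∧
      ∀ j, ℓ j ≤ c j ∧ ¬ ℓ j ≤ mt j := by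
  obtain rfl : mt = fun j => tailInf m j.castSucc :=
    funext fun j => (hmt j).trans (tailInf_castSucc m j).symm
  obtain rfl : c = fun j => tailInf m j.succ :=
    funext fun j => (hc j).trans (tailInf_succ m j).symm
  have hchain : StrictMono (tailInf m) := h.strictMono_tailInf
  have hlt_top (j : Fin k) : tailInf m j.castSucc < ⊤ :=
    (hchain j.castSucc_lt_succ).trans_le le_top
  exact ⟨hchain.comp Fin.strictMono_castSucc, hlt_top, .of_strictMono hchain,
    fun j => ⟨h.le_tailInf_succ j, h.not_le_tailInf_castSucc j⟩⟩

/-- Every c-independent list in a finite lattice is a push of a strict chain: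
given a c-independent list `ℓ` with witness `m`, set `m̃ j := m j ∧ m (j+1) ∧ ⋯ ∧ m (k-1)`
and `c j := m̃ (j+1)` (with `c (k-1) := ⊤`). Then `m̃ 0 < m̃ 1 < ⋯ < m̃ (k-1) < ⊤` is a
strict chain, the chain `c` is a c-independent list with witness `m̃`, and `ℓ` is a push
of `c` with respect to `m̃`, i.e. `ℓ j ≤ c j` and `ℓ j ≰ m̃ j` for every `j`. -/
theorem cIndepList_is_push_of_chain {L : Type*} [Lattice L] [Fintype L] [OrderTop L]
    {k : ℕ} (ℓ m : Fin k → L) (h : CIndepList ℓ m) (mt c : Fin k → L)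
    (hmt : ∀ j : Fin k, mt j = (Finset.Ici j).inf' ⟨j, Finset.mem_Ici.2 le_rfl⟩ m)
    (hc : ∀ j : Fin k, c j = if h : (j : ℕ) + 1 < k then mt ⟨(j : ℕ) + 1, h⟩ else ⊤) :
    StrictMono mt ∧ (∀ j, mt j < ⊤) ∧ CIndepList c mt ∧
      ∀ j, ℓ j ≤ c j ∧ ¬ ℓ j ≤ mt j :=
  cIndepList_is_push_of_chain_general ℓ m h mt c hmt hc
end

section
/- A finite lattice L is distributive if and only if every strictly meet irreducible element of L is meet irreducible. -/
/-- An element `m` of a lattice is meet irreducible if whenever `m` is above the meet of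
a nonempty (finite) subset `X`, it is above some member of `X`. -/
def MeetIrred {L : Type*} [Lattice L] (m : L) : Prop :=
  ∀ (X : Finset L) (hX : X.Nonempty), X.inf' hX id ≤ m → ∃ x ∈ X, x ≤ m

/-- An element `m` of a lattice is strictly meet irreducible if whenever `m` is the meet
of a nonempty (finite) subset `X`, `m` itself belongs to `X`. -/
def StrictMeetIrred {L : Type*} [Lattice L] (m : L) : Prop :=
  ∀ (X : Finset L) (hX : X.Nonempty), m = X.inf' hX id → m ∈ X

/-!
In a lattice satisfying the ascending chain condition, `a ≤ b` can be tested on strictly meet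
irreducible elements: if `a ≰ b`, then an element maximal among those above `b` but not above `a`
is strictly meet irreducible. When such an `m` is moreover meet irreducible, `s ⊓ t ≤ m` and
`s ⊓ t' ≤ m` force `s ≤ m` or both `t ≤ m` and `t' ≤ m`, whence `s ⊓ (t ⊔ t') ≤ m`; testing on all
such `m` gives distributivity. Conversely, if `x ⊓ y ≤ m` in a distributive lattice, then
`m = (m ⊔ x) ⊓ (m ⊔ y)`, so strict meet irreducibility of `m` gives `x ≤ m` or `y ≤ m`.
-/

section Lattice

variable {L : Type*} [Lattice L] {a m s t t' : L}

theorem meetIrred_iff_forall_inf_le :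
    MeetIrred m ↔ ∀ x y : L, x ⊓ y ≤ m → x ≤ m ∨ y ≤ m := by
  classical
  refine ⟨fun hm x y hxy ↦ ?_, fun hm X hX hXm ↦ ?_⟩
  · simpa using hm {x, y} (by simp) (by simpa using hxy)
  · by_contra! hX_not_le
    have inf_not_le : ∀ x, ¬x ≤ m → ∀ y, ¬y ≤ m → ¬x ⊓ y ≤ m :=
      fun x hx y hy hxy ↦ (hm x y hxy).elim hx hy
    exact Finset.inf'_induction hX id inf_not_le hX_not_le hXm

theorem strictMeetIrred_iff_forall_inf_eq :
    StrictMeetIrred m ↔ ∀ x y : L, x ⊓ y = m → x = m ∨ y = m := by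
  classical
  refine ⟨fun hm x y hxy ↦ ?_, fun hm X hX hXm ↦ ?_⟩
  · simpa [eq_comm] using hm {x, y} (by simp) (by simpa using hxy.symm)
  · by_contra hmX
    have lt_inf : ∀ x, m < x → ∀ y, m < y → m < x ⊓ y := fun x hx y hy ↦
      (le_inf hx.le hy.le).lt_of_ne' fun hxy ↦ (hm x y hxy).elim hx.ne' hy.ne'
    have lt_of_mem : ∀ x ∈ X, m < x := fun x hx ↦
      (hXm.trans_le (Finset.inf'_le id hx)).lt_of_ne fun hmx ↦ hmX (hmx ▸ hx)
    exact (Finset.inf'_induction hX id lt_inf lt_of_mem).ne hXm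

theorem meetIrred_iff_isMax_or_infPrime : MeetIrred m ↔ IsMax m ∨ InfPrime m := by
  have of_isMax (hm : IsMax m) (x y : L) (_ : x ⊓ y ≤ m) : x ≤ m ∨ y ≤ m := .inl (hm.isTop x)
  rw [meetIrred_iff_forall_inf_le, InfPrime, or_and_left, eq_true (em _), true_and]
  exact (or_iff_right_of_imp of_isMax).symm

theorem strictMeetIrred_iff_isMax_or_infIrred : StrictMeetIrred m ↔ IsMax m ∨ InfIrred m := by
  have of_isMax (hm : IsMax m) (x y : L) (hxy : x ⊓ y = m) : x = m ∨ y = m :=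
    .inl (hm.eq_of_ge (hxy.ge.trans inf_le_left))
  rw [strictMeetIrred_iff_forall_inf_eq, InfIrred, or_and_left, eq_true (em _), true_and]
  exact (or_iff_right_of_imp of_isMax).symm

theorem strictMeetIrred_of_maximal_not_le (hm : Maximal (fun x ↦ ¬a ≤ x) m) :
    StrictMeetIrred m := by
  rw [strictMeetIrred_iff_forall_inf_eq]
  rintro x y rfl
  by_contra! hxy
  have hx : a ≤ x := not_not.1 (hm.not_prop_of_gt (inf_le_left.lt_of_ne' hxy.1))
  have hy : a ≤ y := not_not.1 (hm.not_prop_of_gt (inf_le_right.lt_of_ne' hxy.2))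
  exact hm.prop (le_inf hx hy)

theorem le_of_forall_strictMeetIrred_le [WellFoundedGT L] {b : L}
    (h : ∀ m, StrictMeetIrred m → b ≤ m → a ≤ m) : a ≤ b := by
  by_contra hab
  obtain ⟨m, hbm, hm⟩ := exists_maximal_ge_of_wellFoundedGT (fun x ↦ ¬a ≤ x) b hab
  exact hm.prop (h m (strictMeetIrred_of_maximal_not_le hm) hbm)

theorem MeetIrred.inf_sup_le (hm : MeetIrred m) (ht : s ⊓ t ≤ m) (ht' : s ⊓ t' ≤ m) :
    s ⊓ (t ⊔ t') ≤ m := by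
  rw [meetIrred_iff_forall_inf_le] at hm
  by_cases hs : s ≤ m
  · exact inf_le_of_left_le hs
  · have htm : t ≤ m := (hm s t ht).resolve_left hs
    have htm' : t' ≤ m := (hm s t' ht').resolve_left hs
    exact inf_le_of_right_le (sup_le htm htm')

end Lattice

theorem StrictMeetIrred.meetIrred {L : Type*} [DistribLattice L] {m : L} (hm : StrictMeetIrred m) :
    MeetIrred m :=
  meetIrred_iff_isMax_or_infPrime.2
    ((strictMeetIrred_iff_isMax_or_infIrred.1 hm).imp_right InfIrred.infPrime)

theorem distrib_iff_smi_imp_mi_general (L : Type*) [Lattice L] [WellFoundedGT L] :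
    (∀ s t t' : L, s ⊓ (t ⊔ t') = (s ⊓ t) ⊔ (s ⊓ t')) ↔
      ∀ m : L, StrictMeetIrred m → MeetIrred m := by
  constructor
  · intro inf_sup_eq
    let _ : DistribLattice L := .ofInfSupLe fun s t t' ↦ (inf_sup_eq s t t').le
    exact fun m hm ↦ hm.meetIrred
  · intro meetIrred_of_strict s t t'
    refine le_antisymm (le_of_forall_strictMeetIrred_le fun m hm hle ↦ ?_) le_inf_sup
    have ⟨ht, ht'⟩ := sup_le_iff.1 hle
    exact (meetIrred_of_strict m hm).inf_sup_le ht ht'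

/-- A finite lattice is distributive iff every strictly meet irreducible element is
meet irreducible. -/
theorem distrib_iff_smi_imp_mi (L : Type*) [Lattice L] [Fintype L] :
    (∀ s t t' : L, s ⊓ (t ⊔ t') = (s ⊓ t) ⊔ (s ⊓ t')) ↔
      ∀ m : L, StrictMeetIrred m → MeetIrred m :=
  distrib_iff_smi_imp_mi_general L
end

section
/- In every finite lattice L, the number of meet irreducible elements different from the top element ⊤ equals the number of join irreducible elements different from the bottom element ⊥. -/
/-- An element `ℓ` of a lattice is join irreducible if whenever `ℓ` is below the join of
a nonempty (finite) subset `X`, it is below some member of `X`. -/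
def JoinIrred {L : Type*} [Lattice L] (ℓ : L) : Prop :=
  ∀ (X : Finset L) (hX : X.Nonempty), ℓ ≤ X.sup' hX id → ∃ x ∈ X, ℓ ≤ x

/-!
`MeetIrred` and `JoinIrred` are primality conditions, so an irreducible `m ≠ ⊤` is a Mathlib
`InfPrime`. If `m` is inf-prime, the elements not below `m` form a filter; when descending chains
stop, this filter has a least element `j`, and the lattice is the disjoint union of the ideal below
`m` and the filter above `j`. Such a partition forces `j` to be sup-prime, each of `m` and `j`
determines the other, and dually every sup-prime `j` arises in this way.
-/

open OrderDual

/-- `m` and `j` form a splitting pair if the principal ideal of `m` and the principal filter of `j`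
are complementary; this is the relation that matches inf-prime with sup-prime elements. It is stated
pointwise so that either element can be recovered from the elements it bounds. -/
def IsSplittingPair {P : Type*} [Preorder P] (m j : P) : Prop :=
  ∀ x, x ≤ m ↔ ¬ j ≤ x

namespace IsSplittingPair

theorem dual {P : Type*} [Preorder P] {m j : P} (h : IsSplittingPair m j) :
    IsSplittingPair (toDual j) (toDual m) :=
  fun x => iff_not_comm.1 (h (ofDual x))

theorem left_unique {P : Type*} [PartialOrder P] {m m' j : P} (h : IsSplittingPair m j)
    (h' : IsSplittingPair m' j) : m = m' :=
  eq_of_forall_le_iff fun x => (h x).trans (h' x).symm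

theorem right_unique {P : Type*} [PartialOrder P] {m j j' : P} (h : IsSplittingPair m j)
    (h' : IsSplittingPair m j') : j = j' :=
  h.dual.left_unique h'.dual

theorem infPrime {L : Type*} [Lattice L] {m j : L} (h : IsSplittingPair m j) : InfPrime m := by
  have hjm : ¬ j ≤ m := (h m).1 le_rfl
  refine ⟨fun hmax => hjm (le_sup_right.trans (hmax le_sup_left)), fun x y hxy => ?_⟩
  by_contra! hnot
  have hjx : j ≤ x := not_not.1 (mt (h x).2 hnot.1)
  have hjy : j ≤ y := not_not.1 (mt (h y).2 hnot.2)
  exact hjm ((le_inf hjx hjy).trans hxy)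

theorem supPrime {L : Type*} [Lattice L] {m j : L} (h : IsSplittingPair m j) : SupPrime j :=
  infPrime_toDual.1 h.dual.infPrime

end IsSplittingPair

theorem exists_isSplittingPair_of_infPrime {L : Type*} [SemilatticeInf L] [WellFoundedLT L]
    {m : L} (hm : InfPrime m) : ∃ j, IsSplittingPair m j := by
  obtain ⟨b, hb⟩ : ∃ b, ¬ b ≤ m := (not_isMax_iff.1 hm.1).imp fun _ => not_le_of_gt
  obtain ⟨j, hj⟩ := exists_minimal_of_wellFoundedLT (fun x => ¬ x ≤ m) ⟨b, hb⟩
  refine ⟨j, fun x => ⟨fun hxm hjx => hj.prop (hjx.trans hxm), fun hjx => ?_⟩⟩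
  by_contra hxm
  have hinf : ¬ j ⊓ x ≤ m := fun hle => (hm.2 hle).elim hj.prop hxm
  exact hjx ((hj.le_of_le hinf inf_le_left).trans inf_le_right)

theorem exists_isSplittingPair_of_supPrime {L : Type*} [SemilatticeSup L] [WellFoundedGT L]
    {j : L} (hj : SupPrime j) : ∃ m, IsSplittingPair m j :=
  let ⟨m, hm⟩ := exists_isSplittingPair_of_infPrime (infPrime_toDual.2 hj)
  ⟨ofDual m, hm.dual⟩

/-- The correspondence sending an inf-prime element to the sup-prime element with which it forms a
splitting pair. -/
noncomputable def infPrimeEquivSupPrime (L : Type*) [Lattice L] [WellFoundedLT L]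
    [WellFoundedGT L] : {m : L | InfPrime m} ≃ {j : L | SupPrime j} where
  toFun m :=
    have h := exists_isSplittingPair_of_infPrime m.2
    ⟨h.choose, h.choose_spec.supPrime⟩
  invFun j :=
    have h := exists_isSplittingPair_of_supPrime j.2
    ⟨h.choose, h.choose_spec.infPrime⟩
  left_inv m := by
    have h := (exists_isSplittingPair_of_infPrime m.2).choose_spec
    have h' := (exists_isSplittingPair_of_supPrime h.supPrime).choose_spec
    exact Subtype.ext (h'.left_unique h)
  right_inv j := by
    have h := (exists_isSplittingPair_of_supPrime j.2).choose_spec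
    have h' := (exists_isSplittingPair_of_infPrime h.infPrime).choose_spec
    exact Subtype.ext (h'.right_unique h)

theorem meetIrred_and_ne_top_iff_infPrime {L : Type*} [Lattice L] [OrderTop L] {m : L} :
    MeetIrred m ∧ m ≠ ⊤ ↔ InfPrime m := by
  classical
  refine ⟨fun ⟨hm, htop⟩ => ⟨isMax_iff_eq_top.not.2 htop, fun x y hxy => ?_⟩,
    fun hm => ⟨fun X hX hXm => ?_, hm.ne_top⟩⟩
  · simpa using hm {x, y} (Finset.insert_nonempty x {y}) (by simpa using hxy)
  · rwa [Finset.inf'_eq_inf, hm.finset_inf_le] at hXm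

theorem joinIrred_and_ne_bot_iff_supPrime {L : Type*} [Lattice L] [OrderBot L] {ℓ : L} :
    JoinIrred ℓ ∧ ℓ ≠ ⊥ ↔ SupPrime ℓ :=
  -- `JoinIrred` on `L` unfolds to `MeetIrred` on `Lᵒᵈ`.
  (meetIrred_and_ne_top_iff_infPrime (m := toDual ℓ)).trans infPrime_toDual

theorem card_mi_eq_card_ji_general (L : Type*) [Lattice L] [WellFoundedLT L] [WellFoundedGT L]
    [BoundedOrder L] :
    {m : L | MeetIrred m ∧ m ≠ ⊤}.encard = {ℓ : L | JoinIrred ℓ ∧ ℓ ≠ ⊥}.encard := by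
  simp only [meetIrred_and_ne_top_iff_infPrime, joinIrred_and_ne_bot_iff_supPrime]
  exact ENat.card_congr (infPrimeEquivSupPrime L)

/-- In every finite lattice, the number of meet irreducible elements different from `⊤`
equals the number of join irreducible elements different from `⊥`. -/
theorem card_mi_eq_card_ji (L : Type*) [Lattice L] [Fintype L] [BoundedOrder L] :
    {m : L | MeetIrred m ∧ m ≠ ⊤}.ncard = {ℓ : L | JoinIrred ℓ ∧ ℓ ≠ ⊥}.ncard :=
  congrArg ENat.toNat (card_mi_eq_card_ji_general L)
end

section
/- If a simple hereditary collection (E, 𝓗) has a boolean representation, then there exist finitely many partitions 𝒬₁,…,𝒬_ℓ of E such that 𝓗 is exactly the collection of subsets of E that are a partial cross section of at least one of the partitions 𝒬₁,…,𝒬_ℓ. -/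
/-- The subsets of `E` "independent" with respect to a boolean matrix `A : R → E → Bool`
(superboolean column independence): a subset `J` is independent iff it can be enumerated
without repetition as `x 0, …, x (k-1)` admitting rows `r 0, …, r (k-1)` with
`A (r j) (x j) = 1` for all `j` and `A (r j) (x i) = 0` for all `i > j`. -/
def BoolIndep {E R : Type*} (A : R → E → Bool) (J : Finset E) : Prop :=
  ∃ (k : ℕ) (x : Fin k → E) (r : Fin k → R), Function.Injective x ∧
    (↑J = Set.range x) ∧ (∀ j, A (r j) (x j) = true) ∧
    (∀ i j : Fin k, j < i → A (r j) (x i) = false)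

/-!
Fix a sequence `r₀, r₁, …` of rows and assign to each column the index of the first row of the
sequence with a `1` in it. Choosing columns with distinct indices and listing them by increasing
index exhibits them as superboolean independent, so every partial cross section of the partition by
index is independent (a column which all the rows of the sequence miss has the largest index, comes
last and needs only some nonzero entry). Conversely, if rows `r₀, …, r_(k-1)` witness the
independence of `x₀, …, x_(k-1)`, then the index of `x_i` is `i`, so this set is a partial cross
section.
-/

/-- `J` is a partial cross section of the partition of `E` into the classes of `s`. Partitions
are encoded as equivalence relations, so that `E` may be infinite. -/
def IsPartialCrossSection {E : Type*} (s : Setoid E) (J : Set E) : Prop :=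
  ∀ Q ∈ s.classes, (J ∩ Q).Subsingleton

/-- The position in the list `l` of the first row having a `1` in column `e`, which is `l.length` if
there is no such row. The fibres of this function are the blocks of the partition of the columns
attached to `l`. -/
def pivotIndex {E R : Type*} (A : R → E → Bool) (l : List R) (e : E) : ℕ :=
  l.findIdx (A · e)

section CrossSections

variable {E : Type*}

theorem isPartialCrossSection_iff {s : Setoid E} {J : Set E} :
    IsPartialCrossSection s J ↔ ∀ a ∈ J, ∀ b ∈ J, s a b → a = b := by
  constructor
  · intro h a ha b hb hab
    exact h _ (s.mem_classes b) ⟨ha, hab⟩ ⟨hb, s.refl b⟩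
  · rintro h _ ⟨c, rfl⟩ a ⟨ha, hac⟩ b ⟨hb, hbc⟩
    exact h a ha b hb (s.trans hac (s.symm hbc))

theorem isPartialCrossSection_ker {α : Type*} {f : E → α} {J : Set E} :
    IsPartialCrossSection (Setoid.ker f) J ↔ J.InjOn f := by
  rw [isPartialCrossSection_iff]
  exact ⟨fun h a ha b hb => h a ha b hb, fun h a ha b hb => h ha hb⟩

variable [Fintype E] [DecidableEq E]

theorem forall_card_inter_ofSetoid_le_one_iff {s : Setoid E} [DecidableRel s.r] {J : Finset E} :
    (∀ P ∈ (Finpartition.ofSetoid s).parts, (J ∩ P).card ≤ 1) ↔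
      IsPartialCrossSection s (J : Set E) := by
  simp only [isPartialCrossSection_iff, Finset.card_le_one, Finset.mem_inter, Finset.mem_coe]
  constructor
  · intro h a ha b hb hab
    exact h _ ((Finpartition.ofSetoid s).part_mem.2 (Finset.mem_univ a))
      a ⟨ha, Finpartition.mem_part_ofSetoid_iff_rel.2 (s.refl a)⟩
      b ⟨hb, Finpartition.mem_part_ofSetoid_iff_rel.2 hab⟩
  · intro h P hP a ⟨ha, haP⟩ b ⟨hb, hbP⟩
    rw [← Finpartition.part_eq_of_mem _ hP haP, Finpartition.mem_part_ofSetoid_iff_rel] at hbP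
    exact h a ha b hb hbP

theorem exists_fin_finpartition_iff_isPartialCrossSection (S : Set (Setoid E)) :
    ∃ (l : ℕ) (Q : Fin l → Finpartition (Finset.univ : Finset E)), ∀ J : Finset E,
      (∃ s ∈ S, IsPartialCrossSection s (J : Set E)) ↔
        ∃ t : Fin l, ∀ P ∈ (Q t).parts, (J ∩ P).card ≤ 1 := by
  classical
  have : Finite (Setoid E) :=
    Finite.of_injective (fun s : Setoid E => s.classes) fun _ _ => Setoid.classes_inj.2
  obtain ⟨l, q, -, rfl⟩ := S.toFinite.fin_param
  refine ⟨l, fun t => Finpartition.ofSetoid (q t), fun J => ?_⟩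
  simp only [Set.exists_range_iff, forall_card_inter_ofSetoid_le_one_iff]

end CrossSections

section BoolIndep

variable {E R : Type*} {A : R → E → Bool} {J : Finset E}

theorem BoolIndep.exists_row (h : BoolIndep A J) {e : E} (he : e ∈ J) : ∃ r, A r e = true := by
  obtain ⟨k, x, r, -, hx, hdiag, -⟩ := h
  obtain ⟨i, rfl⟩ : e ∈ Set.range x := hx ▸ Finset.mem_coe.2 he
  exact ⟨r i, hdiag i⟩

theorem boolIndep_of_injOn {α : Type*} [LinearOrder α] {f : E → α}
    (hf : ∀ e ∈ J, ∃ r, A r e = true ∧ ∀ e' ∈ J, f e < f e' → A r e' = false)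
    (hJ : Set.InjOn f (J : Set E)) : BoolIndep A J := by
  choose r hdiag hzero using hf
  let : LinearOrder J := LinearOrder.lift' (fun e : J => f e) hJ.injective
  let x : Fin (Fintype.card J) ≃o J := Fintype.orderIsoFinOfCardEq J rfl
  refine ⟨_, fun i => x i, fun i => r (x i) (x i).2, Subtype.val_injective.comp x.injective, ?_,
    fun i => hdiag _ (x i).2, fun i j hji => hzero _ (x j).2 _ (x i).2 (x.strictMono hji)⟩
  exact (Subtype.range_coe.symm.trans (x.surjective.range_comp Subtype.val).symm)

theorem exists_row_forall_pivotIndex_lt (l : List R) {e : E} (he : ∃ r, A r e = true) :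
    ∃ r, A r e = true ∧ ∀ e', pivotIndex A l e < pivotIndex A l e' → A r e' = false := by
  by_cases hlt : pivotIndex A l e < l.length
  · exact ⟨l[pivotIndex A l e], List.findIdx_getElem (w := hlt),
      fun e' h => List.not_of_lt_findIdx h⟩
  · obtain ⟨r, hr⟩ := he
    exact ⟨r, hr, fun e' h => absurd (h.trans_le List.findIdx_le_length) hlt⟩

theorem BoolIndep.exists_injOn_pivotIndex (h : BoolIndep A J) :
    ∃ l : List R, Set.InjOn (pivotIndex A l) (J : Set E) := by
  obtain ⟨k, x, r, -, hx, hdiag, hzero⟩ := h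
  have hpivot (i : Fin k) : pivotIndex A (List.ofFn r) (x i) = i := by
    rw [pivotIndex, List.findIdx_eq (by simp)]
    simpa using ⟨hdiag i, fun j hj => hzero i ⟨j, hj.trans i.2⟩ hj⟩
  refine ⟨List.ofFn r, ?_⟩
  rw [hx]
  rintro _ ⟨i, rfl⟩ _ ⟨j, rfl⟩ hij
  rw [hpivot, hpivot] at hij
  rw [Fin.ext hij]

theorem boolIndep_iff_exists_injOn_pivotIndex (hA : ∀ e, ∃ r, A r e = true) :
    BoolIndep A J ↔ ∃ l : List R, Set.InjOn (pivotIndex A l) (J : Set E) := by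
  refine ⟨BoolIndep.exists_injOn_pivotIndex, fun ⟨l, hl⟩ => boolIndep_of_injOn (fun e _ => ?_) hl⟩
  obtain ⟨r, hr, hzero⟩ := exists_row_forall_pivotIndex_lt l (hA e)
  exact ⟨r, hr, fun e' _ => hzero e'⟩

end BoolIndep

theorem hereditary_boolean_rep_partial_cross_sections_general
    {E R : Type*} (H : Set (Finset E)) (hsingle : ∀ e, {e} ∈ H)
    (A : R → E → Bool) (hA : ∀ J : Finset E, J ∈ H ↔ BoolIndep A J) :
    ∃ S : Set (Setoid E), ∀ J : Finset E,
      J ∈ H ↔ ∃ s ∈ S, IsPartialCrossSection s (J : Set E) := by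
  have hrow (e : E) : ∃ r, A r e = true :=
    ((hA _).1 (hsingle e)).exists_row (Finset.mem_singleton_self e)
  refine ⟨Set.range fun l => Setoid.ker (pivotIndex A l), fun J => ?_⟩
  rw [hA, boolIndep_iff_exists_injOn_pivotIndex hrow]
  simp only [Set.exists_range_iff, isPartialCrossSection_ker]

/-- If a simple hereditary collection `(E, H)` has a boolean representation, then there
are finitely many partitions `Q 0, …, Q (l-1)` of `E` such that `H` is exactly the
collection of subsets of `E` that are a partial cross section (at most one element in
each block) of at least one of these partitions. -/
theorem hereditary_boolean_rep_partial_cross_sections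
    {E : Type*} [Fintype E] [DecidableEq E] (H : Set (Finset E))
    (hne : H.Nonempty) (hher : ∀ J ∈ H, ∀ J' ⊆ J, J' ∈ H)
    (hsimple : ∀ J : Finset E, J.card ≤ 2 → J ∈ H)
    (hrep : ∃ (R : Type) (_ : Fintype R) (A : R → E → Bool),
      ∀ J : Finset E, J ∈ H ↔ BoolIndep A J) :
    ∃ (l : ℕ) (Q : Fin l → Finpartition (Finset.univ : Finset E)),
      ∀ J : Finset E, J ∈ H ↔ ∃ t : Fin l, ∀ P ∈ (Q t).parts, (J ∩ P).card ≤ 1 := by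
  obtain ⟨R, _, A, hA⟩ := hrep
  obtain ⟨S, hS⟩ := hereditary_boolean_rep_partial_cross_sections_general H
    (fun e => hsimple {e} (by simp)) A hA
  simpa only [hS] using exists_fin_finpartition_iff_isPartialCrossSection S
end

section
/- Let E = {1,2,3,4,5} and let 𝓗 be the collection of all subsets of E contained in at least one of the five sets {1,2,3}, {1,2,4}, {2,3,5}, {1,4,5}, {3,4,5}. Then (E, 𝓗) is a hereditary collection satisfying the point replacement property, but (E, 𝓗) admits no boolean representation. -/
/-- The hereditary collection on `E = {1,2,3,4,5}` (here modeled as `Fin 5`) whose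
members are the subsets of the five bases `{1,2,3}, {1,2,4}, {2,3,5}, {1,4,5}, {3,4,5}`
(here `{0,1,2}, {0,1,3}, {1,2,4}, {0,3,4}, {2,3,4}`). -/
def ExH : Set (Finset (Fin 5)) :=
  {J | J ⊆ {0, 1, 2} ∨ J ⊆ {0, 1, 3} ∨ J ⊆ {1, 2, 4} ∨ J ⊆ {0, 3, 4} ∨ J ⊆ {2, 3, 4}}

/-!
The columns vanishing in a row of a boolean representation of `H` form a flat of `H`, and every
nonempty `J ∈ H` has an element `x` avoided by some flat containing the rest of `J` (the zeros of
the first row in an enumeration of `J`). In `ExH`, however, closing any two elements of the basis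
`{0, 1, 2}` under the defining condition of flats reaches the third one.
-/

section HereditaryCollection

variable {E : Type*} [DecidableEq E] {H : Set (Finset E)} {F : Set E} {J : Finset E}

/-- The point replacement property (PR) of a collection of finite sets. -/
def PointReplacement (H : Set (Finset E)) : Prop :=
  ∀ p, {p} ∈ H → ∀ J ∈ H, J.Nonempty → ∃ x ∈ J, insert p (J.erase x) ∈ H

/-- A flat (or closed set) of a collection `H`: adding a point outside `F` to a member of `H`
inside `F` always gives a member of `H`. -/
def IsFlat (H : Set (Finset E)) (F : Set E) : Prop :=
  ∀ J ∈ H, ↑J ⊆ F → ∀ p ∉ F, insert p J ∈ H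

theorem IsFlat.mem_of_insert_notMem (hF : IsFlat H F) (hJ : J ∈ H) (hJF : ↑J ⊆ F) {p : E}
    (hp : insert p J ∉ H) : p ∈ F :=
  by_contra fun hpF => hp (hF J hJ hJF p hpF)

theorem pointReplacement_lowerClosure {𝓑 : Set (Finset E)}
    (h𝓑 : ∀ p, {p} ∈ lowerClosure 𝓑 → ∀ B ∈ 𝓑, ∃ x ∈ B, insert p (B.erase x) ∈ lowerClosure 𝓑) :
    PointReplacement (lowerClosure 𝓑 : Set (Finset E)) := by
  intro p hp J hJ hJne
  obtain ⟨B, hB, hJB⟩ := mem_lowerClosure.1 hJ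
  obtain ⟨x, -, hx⟩ := h𝓑 p hp B hB
  by_cases hxJ : x ∈ J
  · exact ⟨x, hxJ, (lowerClosure 𝓑).lower (by gcongr) hx⟩
  · obtain ⟨y, hy⟩ := hJne
    have hJx : J ⊆ B.erase x := Finset.subset_erase.2 ⟨hJB, hxJ⟩
    exact ⟨y, hy, (lowerClosure 𝓑).lower
      (Finset.insert_subset_insert p ((J.erase_subset y).trans hJx)) hx⟩

end HereditaryCollection

section BooleanRepresentation

variable {E R : Type*} {A : R → E → Bool} {H : Set (Finset E)} {J : Finset E}

theorem BoolIndep.insert [DecidableEq E] (hJ : BoolIndep A J) {r : R} {c : E}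
    (hc : A r c = true) (hr : ∀ y ∈ J, A r y = false) : BoolIndep A (insert c J) := by
  obtain ⟨k, x, ρ, hx, hJx, hone, hzero⟩ := hJ
  have hxJ (i : Fin k) : x i ∈ J := Finset.mem_coe.1 (hJx ▸ Set.mem_range_self i)
  have hcx : c ∉ Set.range x := by
    rw [← hJx, Finset.mem_coe]
    exact fun hcJ => Bool.false_ne_true ((hr c hcJ).symm.trans hc)
  refine ⟨k + 1, Fin.cons c x, Fin.cons r ρ, Fin.cons_injective_iff.2 ⟨hcx, hx⟩, ?_, ?_, ?_⟩
  · rw [Finset.coe_insert, hJx, Fin.range_cons]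
  · exact Fin.cases hc hone
  · intro i j hij
    cases i using Fin.cases with
    | zero => exact absurd hij j.not_lt_zero
    | succ i =>
      cases j using Fin.cases with
      | zero => exact hr _ (hxJ i)
      | succ j => exact hzero i j (Fin.succ_lt_succ_iff.1 hij)

theorem BoolIndep.exists_row_s17 [DecidableEq E] (hJ : BoolIndep A J) (hne : J.Nonempty) :
    ∃ x ∈ J, ∃ r, A r x = true ∧ ∀ y ∈ J.erase x, A r y = false := by
  obtain ⟨k, x, ρ, -, hJx, hone, hzero⟩ := hJ
  have mem_iff (y : E) : y ∈ J ↔ ∃ i, x i = y := by rw [← Finset.mem_coe, hJx, Set.mem_range]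
  obtain ⟨y, hy⟩ := hne
  obtain ⟨i, -⟩ := (mem_iff y).1 hy
  have : NeZero k := i.neZero
  refine ⟨x 0, (mem_iff _).2 ⟨0, rfl⟩, ρ 0, hone 0, fun z hz => ?_⟩
  obtain ⟨hz0, hzJ⟩ := Finset.mem_erase.1 hz
  obtain ⟨j, rfl⟩ := (mem_iff z).1 hzJ
  exact hzero j 0 (Fin.pos_iff_ne_zero.2 fun hj => hz0 (congrArg x hj))

/-- `A` is a boolean representation of the collection `H`; the row type need not be finite. -/
def IsBoolRep (A : R → E → Bool) (H : Set (Finset E)) : Prop :=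
  ∀ J, J ∈ H ↔ BoolIndep A J

variable [DecidableEq E]

theorem IsBoolRep.isFlat_zeros (hA : IsBoolRep A H) (r : R) : IsFlat H {e | A r e = false} :=
  fun J hJ hJr _ hp => (hA _).2 (((hA J).1 hJ).insert (Bool.not_eq_false _ ▸ hp) hJr)

theorem IsBoolRep.exists_isFlat (hA : IsBoolRep A H) (hJ : J ∈ H) (hne : J.Nonempty) :
    ∃ x ∈ J, ∃ F, IsFlat H F ∧ ↑(J.erase x) ⊆ F ∧ x ∉ F := by
  obtain ⟨x, hxJ, r, hx, hr⟩ := ((hA J).1 hJ).exists_row_s17 hne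
  exact ⟨x, hxJ, {e | A r e = false}, hA.isFlat_zeros r, hr, by simp [hx]⟩

end BooleanRepresentation

section ExH

/-- The five bases generating `ExH`. -/
def exBases : Finset (Finset (Fin 5)) :=
  {{0, 1, 2}, {0, 1, 3}, {1, 2, 4}, {0, 3, 4}, {2, 3, 4}}

theorem exH_eq_lowerClosure : ExH = lowerClosure (exBases : Set (Finset (Fin 5))) := by
  ext J
  simp [ExH, exBases]

theorem mem_exH_iff {J : Finset (Fin 5)} : J ∈ ExH ↔ ∃ B ∈ exBases, J ⊆ B := by
  simp [exH_eq_lowerClosure]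

instance : DecidablePred (· ∈ ExH) := fun _ => decidable_of_iff _ mem_exH_iff.symm

theorem isLowerSet_exH : IsLowerSet ExH :=
  exH_eq_lowerClosure ▸ (lowerClosure _).lower

theorem pointReplacement_exH : PointReplacement ExH := by
  have exchange : ∀ p, ∀ B ∈ exBases, ∃ x ∈ B, insert p (B.erase x) ∈ ExH := by decide
  rw [exH_eq_lowerClosure] at exchange ⊢
  exact pointReplacement_lowerClosure fun p _ => exchange p

theorem IsFlat.mem_of_erase_subset_exH {F : Set (Fin 5)} (hF : IsFlat ExH F) {x : Fin 5}
    (hx : x ∈ ({0, 1, 2} : Finset (Fin 5))) (hxF : ↑(({0, 1, 2} : Finset (Fin 5)).erase x) ⊆ F) :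
    x ∈ F := by
  have mem_of_pair {a b : Fin 5} (c : Fin 5) (ha : a ∈ F) (hb : b ∈ F)
      (h : {a, b} ∈ ExH ∧ {c, a, b} ∉ ExH) : c ∈ F :=
    hF.mem_of_insert_notMem h.1 (by simp [Set.insert_subset_iff, ha, hb]) h.2
  have hmem {y : Fin 5} (hy : y ∈ ({0, 1, 2} : Finset (Fin 5)).erase x) : y ∈ F := hxF hy
  simp only [Finset.mem_insert, Finset.mem_singleton] at hx
  rcases hx with rfl | rfl | rfl
  · have h1 : 1 ∈ F := hmem (by decide)
    have h2 : 2 ∈ F := hmem (by decide)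
    have h3 : 3 ∈ F := mem_of_pair 3 h1 h2 (by decide)
    have h4 : 4 ∈ F := mem_of_pair 4 h1 h3 (by decide)
    exact mem_of_pair 0 h1 h4 (by decide)
  · have h0 : 0 ∈ F := hmem (by decide)
    have h2 : 2 ∈ F := hmem (by decide)
    have h3 : 3 ∈ F := mem_of_pair 3 h0 h2 (by decide)
    exact mem_of_pair 1 h2 h3 (by decide)
  · have h0 : 0 ∈ F := hmem (by decide)
    have h1 : 1 ∈ F := hmem (by decide)
    have h4 : 4 ∈ F := mem_of_pair 4 h0 h1 (by decide)
    exact mem_of_pair 2 h0 h4 (by decide)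

theorem not_isBoolRep_exH {R : Type*} (A : R → Fin 5 → Bool) : ¬ IsBoolRep A ExH := by
  intro hA
  obtain ⟨x, hx, F, hF, hxF, hnx⟩ :=
    hA.exists_isFlat (J := {0, 1, 2}) (by decide) (Finset.insert_nonempty _ _)
  exact hnx (hF.mem_of_erase_subset_exH hx hxF)

end ExH

theorem exists_PR_hereditary_without_boolean_rep_general :
    (ExH.Nonempty ∧ IsLowerSet ExH) ∧ PointReplacement ExH ∧
      ∀ {R : Type*} (A : R → Fin 5 → Bool), ¬ IsBoolRep A ExH :=
  ⟨⟨⟨∅, by decide⟩, isLowerSet_exH⟩, pointReplacement_exH, not_isBoolRep_exH⟩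

/-- `(Fin 5, ExH)` is a hereditary collection satisfying the point replacement property,
yet it admits no boolean representation. -/
theorem exists_PR_hereditary_without_boolean_rep :
    (ExH.Nonempty ∧ ∀ J ∈ ExH, ∀ J' ⊆ J, J' ∈ ExH) ∧
    (∀ p : Fin 5, ({p} : Finset (Fin 5)) ∈ ExH → ∀ J ∈ ExH, J.Nonempty →
      ∃ x ∈ J, insert p (J.erase x) ∈ ExH) ∧
    ¬ ∃ (R : Type) (_ : Fintype R) (A : R → Fin 5 → Bool),
        ∀ J : Finset (Fin 5), J ∈ ExH ↔ BoolIndep A J :=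
  let ⟨⟨hne, hlower⟩, hPR, hrep⟩ := exists_PR_hereditary_without_boolean_rep_general
  ⟨⟨hne, fun _ hJ _ hJ' => hlower hJ' hJ⟩, hPR, fun ⟨_, _, A, hA⟩ => hrep A hA⟩
end
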